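/- The Galois group over ℚ of (the splitting field of) the polynomial Z⁴ − (14/19)Z³ + (34/19)Z² − (14/19)Z + 1 ∈ ℚ[Z] is isomorphic to the dihedral group D₄ of order 8. -/

import Mathlib

open Polynomial

lemma aux_dihedral {G : Type*} [Group G] (ρ τ : G) (h4 : ρ ^ 4 = 1) (h2 : τ * τ = 1)
    (h : ρ * τ = τ * ρ ^ 3) (hρ : ρ ^ 2 ≠ 1) (hτ : ∀ i : ℕ, τ * ρ ^ i ≠ 1)
    (hs : ∀ g : G, ∃ i : ℕ, g = ρ ^ i ∨ g = τ * ρ ^ i) :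
    Nonempty (G ≃* DihedralGroup 4) := by
  have hmod : ∀ a b : ℕ, a % 4 = b % 4 → ρ ^ a = ρ ^ b := by
    intro a b hab
    rw [← Nat.div_add_mod a 4, ← Nat.div_add_mod b 4, pow_add, pow_add, pow_mul, pow_mul, h4, hab]
    simp
  have hcomm : ∀ a : ℕ, ρ ^ a * τ = τ * ρ ^ (3 * a) := by
    intro a
    induction a with
    | zero => simp
    | succ n ih =>
      rw [pow_succ, mul_assoc, h, ← mul_assoc, ih, mul_assoc, ← pow_add]
      rfl
  let F : DihedralGroup 4 →* G :=
    { toFun := fun x => match x with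
        | .r i => ρ ^ i.val
        | .sr i => τ * ρ ^ i.val
      map_one' := by
        rw [DihedralGroup.one_def]; simp
      map_mul' := by
        rintro (i | i) (j | j)
        · simp only [DihedralGroup.r_mul_r, ← pow_add]
          apply hmod; revert i j; decide
        · simp only [DihedralGroup.r_mul_sr]
          rw [← mul_assoc, hcomm, mul_assoc, ← pow_add]
          congr 1
          apply hmod; revert i j; decide
        · simp only [DihedralGroup.sr_mul_r]
          rw [mul_assoc, ← pow_add]
          congr 1
          apply hmod; revert i j; decide
        · simp only [DihedralGroup.sr_mul_sr]
          rw [mul_assoc, ← mul_assoc (ρ ^ _), hcomm, mul_assoc, ← mul_assoc τ, h2, one_mul,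
            ← pow_add]
          apply hmod; revert i j; decide }
  have hinj : Function.Injective F := by
    rw [injective_iff_map_eq_one]
    rintro (i | i) hi
    · change ρ ^ i.val = 1 at hi
      have : ρ ^ (2 * i.val) = 1 := by rw [mul_comm, pow_mul, hi, one_pow]
      have hlt := i.val_lt
      have hv : i.val = 0 := by
        interval_cases hv : i.val
        · rfl
        · simp at hi; simp [hi] at hρ
        · exact absurd hi hρ
        · exfalso
          have h6 := hmod (2*3) 2 rfl
          rw [this] at h6
          exact hρ h6.symm
      rw [ZMod.val_eq_zero] at hv
      rw [hv]; rfl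
    · exact absurd hi (hτ _)
  have hsurj : Function.Surjective F := by
    intro g
    obtain ⟨i, hi | hi⟩ := hs g
    · refine ⟨.r (i : ZMod 4), ?_⟩
      change ρ ^ (i : ZMod 4).val = g
      rw [hi]; apply hmod; rw [ZMod.val_natCast]; simp
    · refine ⟨.sr (i : ZMod 4), ?_⟩
      change τ * ρ ^ (i : ZMod 4).val = g
      rw [hi]; congr 1; apply hmod; rw [ZMod.val_natCast]; simp
  exact ⟨(MulEquiv.ofBijective F ⟨hinj, hsurj⟩).symm⟩

lemma aux_flip {K : Type*} [Field K] [Algebra ℚ K] [FiniteDimensional ℚ K] [IsGalois ℚ K]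
    (n : ℚ) (hn : ¬ IsSquare n) (x : K) (hx : x ^ 2 = algebraMap ℚ K n) :
    ∃ σ : K ≃ₐ[ℚ] K, σ x = - x := by
  by_contra! hc
  have hfix : ∀ σ : K ≃ₐ[ℚ] K, σ x = x := by
    intro σ
    have : (σ x) ^ 2 = x ^ 2 := by rw [← map_pow, hx, AlgEquiv.commutes]
    rcases sq_eq_sq_iff_eq_or_eq_neg.mp this with h | h
    · exact h
    · exact absurd h (hc σ)
  have := (IsGalois.mem_bot_iff_fixed (F := ℚ) (E := K) x).mpr hfix
  obtain ⟨q, hq⟩ := IntermediateField.mem_bot.mp this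
  apply hn
  refine ⟨q, (algebraMap ℚ K).injective ?_⟩
  rw [← hx, map_mul, hq, sq]

lemma aux_field {K : Type*} [Field K] [Algebra ℚ K] [FiniteDimensional ℚ K] [IsGalois ℚ K]
    (s d e : K) (hs : s ^ 2 = 5) (hd : d ^ 2 = -1270 + 70 * s) (he : e ^ 2 = -1270 - 70 * s)
    (hext : ∀ σ τ : K ≃ₐ[ℚ] K, σ d = τ d → σ e = τ e → σ = τ) :
    Nonempty ((K ≃ₐ[ℚ] K) ≃* DihedralGroup 4) := by
  haveI : CharZero K := algebraRat.charZero K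
  have hs0 : s ≠ 0 := by rintro rfl; norm_num at hs
  have hde : d ^ 2 * e ^ 2 = 1588400 := by
    rw [hd, he]; linear_combination (-4900) * hs
  have hd0 : d ≠ 0 := by rintro rfl; norm_num at hde
  have he0 : e ≠ 0 := by rintro rfl; norm_num at hde
  have h2 : (2 : K) ≠ 0 := two_ne_zero
  have hne : ∀ x : K, x ≠ 0 → -x ≠ x := by
    intro x hx h
    exact hx (by simpa using (self_eq_neg.mp h.symm))
  have hdd : d ^ 2 ≠ e ^ 2 := by
    rw [hd, he]; intro h
    have : (140 : K) * s = 0 := by linear_combination h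
    simp [hs0] at this
  obtain ⟨t, ht⟩ : ∃ t : K, t = d * e := ⟨_, rfl⟩
  have ht0 : t ≠ 0 := by rw [ht]; exact mul_ne_zero hd0 he0
  have hs5 : s ^ 2 = algebraMap ℚ K 5 := by rw [hs]; simp
  have ht11 : t ^ 2 = algebraMap ℚ K 1588400 := by rw [ht, mul_pow, hde]; simp
  have hst : (s * t) ^ 2 = algebraMap ℚ K 7942000 := by
    rw [mul_pow, hs5, ht11, ← map_mul]; norm_num
  have pm : ∀ (σ : K ≃ₐ[ℚ] K) (x y : K), (σ x) ^ 2 = y ^ 2 → σ x = y ∨ σ x = -y :=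
    fun σ x y h => sq_eq_sq_iff_eq_or_eq_neg.mp h
  have σs : ∀ σ : K ≃ₐ[ℚ] K, σ s = s ∨ σ s = - s := fun σ => pm σ s s (by
    rw [← map_pow, hs5, AlgEquiv.commutes])
  have σt : ∀ σ : K ≃ₐ[ℚ] K, σ t = t ∨ σ t = - t := fun σ => pm σ t t (by
    rw [← map_pow, ht11, AlgEquiv.commutes])
  have σd2 : ∀ σ : K ≃ₐ[ℚ] K, (σ d) ^ 2 = -1270 + 70 * σ s := by
    intro σ; rw [← map_pow, hd]; simp [map_ofNat]
  have σe2 : ∀ σ : K ≃ₐ[ℚ] K, (σ e) ^ 2 = -1270 - 70 * σ s := by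
    intro σ; rw [← map_pow, he]; simp [map_ofNat]
  obtain ⟨g1, hg1⟩ := aux_flip 5 (by norm_num) s hs5
  obtain ⟨g2, hg2⟩ := aux_flip 1588400 (by norm_num) t ht11
  obtain ⟨g3, hg3⟩ := aux_flip 7942000 (by norm_num) (s * t) hst
  have hτ : ∃ τ : K ≃ₐ[ℚ] K, τ s = s ∧ τ t = -t := by
    rw [map_mul] at hg3
    rcases σs g3 with a | a <;> rcases σt g3 with b | b
    · rw [a, b] at hg3; exact absurd hg3.symm (hne _ (mul_ne_zero hs0 ht0))
    · exact ⟨g3, a, b⟩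
    · rcases σs g2 with c | c
      · exact ⟨g2, c, hg2⟩
      · exact ⟨g3 * g2, by simp [c, a], by simp [hg2, b]⟩
    · rw [a, b, neg_mul_neg] at hg3; exact absurd hg3.symm (hne _ (mul_ne_zero hs0 ht0))
  obtain ⟨τ, hτs, hτt⟩ := hτ
  have hρ : ∃ ρ : K ≃ₐ[ℚ] K, ρ s = -s ∧ ρ t = -t := by
    rcases σt g1 with c | c
    · exact ⟨g1 * τ, by simp [hτs, hg1], by simp [hτt, c]⟩
    · exact ⟨g1, hg1, c⟩
  obtain ⟨ρ, hρs, hρt⟩ := hρ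
  -- normalise ρ
  have hρ' : ∃ ρ : K ≃ₐ[ℚ] K, ρ d = e ∧ ρ e = -d := by
    have h1 := pm ρ d e (by rw [σd2, hρs, he]; ring)
    rw [ht, map_mul] at hρt
    have h3 : ∀ ρ : K ≃ₐ[ℚ] K, ρ d = e → ρ d * ρ e = -(d * e) → ρ e = -d := by
      intro ρ h h'
      rw [h] at h'
      apply mul_left_cancel₀ he0; rw [h']; ring
    rcases h1 with h | h
    · exact ⟨ρ, h, h3 ρ h hρt⟩
    · have h' : ρ e = d := by
        rw [h] at hρt
        apply mul_left_cancel₀ he0; linear_combination -hρt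
      exact ⟨ρ * ρ * ρ, by simp [h, h'], by simp [h, h']⟩
  obtain ⟨ρ, hρd, hρe⟩ := hρ'
  have hτ' : ∃ τ : K ≃ₐ[ℚ] K, τ d = d ∧ τ e = -e := by
    have h1 := pm τ d d (by rw [σd2, hτs, hd])
    rw [ht, map_mul] at hτt
    rcases h1 with h | h
    · rw [h] at hτt
      exact ⟨τ, h, by apply mul_left_cancel₀ hd0; linear_combination hτt⟩
    · rw [h] at hτt
      have h' : τ e = e := by apply mul_left_cancel₀ hd0; linear_combination -hτt
      exact ⟨τ * ρ * ρ, by simp [h, hρd, hρe], by simp [h', hρd, hρe]⟩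
  obtain ⟨τ, hτd, hτe⟩ := hτ'
  have hr4 : ρ ^ 4 = 1 := by
    apply hext <;> simp [pow_succ, hρd, hρe]
  refine aux_dihedral ρ τ hr4 ?_ ?_ ?_ ?_ ?_
  · apply hext <;> simp [hτd, hτe]
  · apply hext <;> simp [pow_succ, hρd, hρe, hτd, hτe]
  · intro h
    have := DFunLike.congr_fun h d
    simp [pow_succ, hρd, hρe] at this
    exact hne d hd0 this
  · intro i h
    have hτρ : τ = (ρ ^ i)⁻¹ := eq_inv_of_mul_eq_one_left h
    have hc : τ * ρ = ρ * τ := by rw [hτρ]; group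
    have := DFunLike.congr_fun hc d
    simp [hρd, hρe, hτd, hτe] at this
    exact hne e he0 this
  · intro g
    rcases σs g with a | a
    · rcases pm g d d (by rw [σd2, a, hd]) with b | b <;>
      rcases pm g e e (by rw [σe2, a, he]) with c | c
      · exact ⟨0, .inl (by apply hext <;> simp [b, c])⟩
      · exact ⟨0, .inr (by apply hext <;> simp [b, c, hτd, hτe])⟩
      · exact ⟨2, .inr (by apply hext <;> simp [b, c, hτd, hτe, pow_succ, hρd, hρe])⟩
      · exact ⟨2, .inl (by apply hext <;> simp [b, c, hτd, hτe, pow_succ, hρd, hρe])⟩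
    · rcases pm g d e (by rw [σd2, a, he]; ring) with b | b <;>
      rcases pm g e d (by rw [σe2, a, hd]; ring) with c | c
      · exact ⟨3, .inr (by apply hext <;> simp [b, c, hτd, hτe, pow_succ, hρd, hρe])⟩
      · exact ⟨1, .inl (by apply hext <;> simp [b, c, hτd, hτe, pow_succ, hρd, hρe])⟩
      · exact ⟨3, .inl (by apply hext <;> simp [b, c, hτd, hτe, pow_succ, hρd, hρe])⟩
      · exact ⟨1, .inr (by apply hext <;> simp [b, c, hτd, hτe, pow_succ, hρd, hρe])⟩

lemma aux_poly {K : Type*} [Field K] [Algebra ℚ K] [FiniteDimensional ℚ K] [IsGalois ℚ K]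
    (p : ℚ[X])
    (hp : p = X ^ 4 - C (14 / 19 : ℚ) * X ^ 3 + C (34 / 19 : ℚ) * X ^ 2 - C (14 / 19 : ℚ) * X + 1)
    (hsp : (p.map (algebraMap ℚ K)).Splits)
    (hgal : ∀ σ τ : K ≃ₐ[ℚ] K, (∀ x ∈ p.rootSet K, σ x = τ x) → σ = τ) :
    Nonempty ((K ≃ₐ[ℚ] K) ≃* DihedralGroup 4) := by
  have hdeg : p.natDegree = 4 := by rw [hp]; compute_degree!
  have hp0 : p ≠ 0 := by rintro h; rw [h] at hdeg; simp at hdeg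
  have : CharZero K := algebraRat.charZero K
  have hm : p.map (algebraMap ℚ K) =
      X ^ 4 - C (14 / 19 : K) * X ^ 3 + C (34 / 19 : K) * X ^ 2 - C (14 / 19 : K) * X + 1 := by
    rw [hp]; simp
  have hm0 : p.map (algebraMap ℚ K) ≠ 0 := by simpa using hp0
  obtain ⟨x, hx⟩ := hsp.exists_eval_eq_zero (by
    rw [degree_map, degree_eq_natDegree hp0, hdeg]; norm_num)
  have hx' : x ^ 4 - 14 / 19 * x ^ 3 + 34 / 19 * x ^ 2 - 14 / 19 * x + 1 = 0 := by
    rw [hm] at hx; simpa using hx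
  have hx0 : x ≠ 0 := by rintro rfl; norm_num at hx'
  obtain ⟨w, hw⟩ : ∃ w : K, w = x + x⁻¹ := ⟨_, rfl⟩
  have hw2 : 19 * w ^ 2 - 14 * w - 4 = 0 := by
    rw [hw]; field_simp; linear_combination 19 * hx'
  obtain ⟨s, hs⟩ : ∃ s : K, s = (19 * w - 7) / 5 := ⟨_, rfl⟩
  have hws : w = (7 + 5 * s) / 19 := by rw [hs]; field_simp; ring
  have hs5 : s ^ 2 = 5 := by rw [hs]; linear_combination (19 / 25) * hw2
  obtain ⟨v, hv⟩ : ∃ v : K, v = (7 - 5 * s) / 19 := ⟨_, rfl⟩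
  have hfac : ∀ z : K, z ^ 4 - 14 / 19 * z ^ 3 + 34 / 19 * z ^ 2 - 14 / 19 * z + 1 =
      (z ^ 2 - w * z + 1) * (z ^ 2 - v * z + 1) := by
    intro z; rw [hws, hv]; linear_combination (25 / 361) * z ^ 2 * hs5
  have hdvd : (X ^ 2 - C v * X + 1 : K[X]) ∣ p.map (algebraMap ℚ K) := by
    refine ⟨X ^ 2 - C w * X + 1, ?_⟩
    rw [hm]
    apply Polynomial.funext
    intro z
    simp only [eval_add, eval_sub, eval_mul, eval_pow, eval_X, eval_C, eval_one]
    rw [hfac z, mul_comm]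
  have hdeg2 : (X ^ 2 - C v * X + 1 : K[X]).degree = 2 := by compute_degree!
  obtain ⟨y, hy⟩ := (hsp.of_dvd hm0 hdvd).exists_eval_eq_zero (by rw [hdeg2]; norm_num)
  have hy' : y ^ 2 - v * y + 1 = 0 := by simpa using hy
  have hxw : x ^ 2 - w * x + 1 = 0 := by rw [hw]; field_simp; ring
  obtain ⟨d, hd⟩ : ∃ d : K, d = 19 * (2 * x - w) := ⟨_, rfl⟩
  obtain ⟨e, he⟩ : ∃ e : K, e = 19 * (2 * y - v) := ⟨_, rfl⟩
  have hd2 : d ^ 2 = -1270 + 70 * s := by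
    rw [hd]
    have : (19 * (2 * x - w)) ^ 2 = 361 * (w ^ 2 - 4) := by linear_combination 361 * 4 * hxw
    rw [this, hws]; linear_combination 25 * hs5
  have he2 : e ^ 2 = -1270 - 70 * s := by
    rw [he]
    have : (19 * (2 * y - v)) ^ 2 = 361 * (v ^ 2 - 4) := by linear_combination 361 * 4 * hy'
    rw [this, hv]; linear_combination 25 * hs5
  refine aux_field (K := K) s d e hs5 hd2 he2 ?_
  intro σ τ h1 h2
  have hss : σ s = τ s := by
    have : s = (d ^ 2 + 1270) / 70 := by rw [hd2]; ring
    rw [this]; simp [map_ofNat, h1]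
  apply hgal
  intro z hz
  have hz' : z ^ 4 - 14 / 19 * z ^ 3 + 34 / 19 * z ^ 2 - 14 / 19 * z + 1 = 0 := by
    have := (mem_rootSet.mp hz).2
    rw [aeval_def, ← eval_map, hm] at this
    simpa using this
  rw [hfac, mul_eq_zero] at hz'
  rcases hz' with hz' | hz'
  · have : (19 * (2 * z - w)) ^ 2 = d ^ 2 := by
      rw [hd]; linear_combination 361 * 4 * hz' - 361 * 4 * hxw
    rcases sq_eq_sq_iff_eq_or_eq_neg.mp this with h | h
    · have : z = ((7 + 5 * s) + d) / 38 := by rw [← h, hws]; ring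
      rw [this]; simp [map_ofNat, h1, hss]
    · have : z = ((7 + 5 * s) - d) / 38 := by linear_combination (1 / 38) * h + (1 / 2) * hws
      rw [this]; simp [map_ofNat, h1, hss]
  · have : (19 * (2 * z - v)) ^ 2 = e ^ 2 := by
      rw [he]; linear_combination 361 * 4 * hz' - 361 * 4 * hy'
    rcases sq_eq_sq_iff_eq_or_eq_neg.mp this with h | h
    · have : z = ((7 - 5 * s) + e) / 38 := by linear_combination (1 / 38) * h + (1 / 2) * hv
      rw [this]; simp [map_ofNat, h2, hss]
    · have : z = ((7 - 5 * s) - e) / 38 := by linear_combination (1 / 38) * h + (1 / 2) * hv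
      rw [this]; simp [map_ofNat, h2, hss]

lemma aux_gal {F : Type*} [Field F] [CharZero F] (p : F[X]) : IsGalois F p.SplittingField where

lemma aux_fin {F : Type*} [Field F] (p : F[X]) : FiniteDimensional F p.SplittingField :=
  inferInstance

/-- The Galois group over `ℚ` of the quartic
`Z⁴ − (14/19)Z³ + (34/19)Z² − (14/19)Z + 1` (the nontrivial factor `χ^tr_19` of the
characteristic polynomial of Frobenius in the proof of Example 6.2/1.6 of the paper)
is the dihedral group `D₄` of order 8. -/
theorem gal_chi_tr_19_eq_D4 :
    Nonempty
      ((X ^ 4 - C (14 / 19 : ℚ) * X ^ 3 + C (34 / 19 : ℚ) * X ^ 2 - C (14 / 19 : ℚ) * X + 1 :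
        ℚ[X]).Gal ≃* DihedralGroup 4) := by
  generalize hp : (X ^ 4 - C (14 / 19 : ℚ) * X ^ 3 + C (34 / 19 : ℚ) * X ^ 2
    - C (14 / 19 : ℚ) * X + 1 : ℚ[X]) = p
  exact @aux_poly p.SplittingField _ _ (aux_fin p) (aux_gal p) p hp.symm
    (SplittingField.splits p) (fun σ τ h => Polynomial.Gal.ext (p := p) h)
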